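/- Let σ_1 ∈ Gal(K_2/K_0) be as in Proposition 3.4 (so (σ_1−1)x_1 = 1 + ε with v_2(ε) > 0) and set σ_2 = σ_1^p. Then (σ_2 − 1)x_1 = 0 and (σ_2 − 1)x_2 = 1 + δ for some δ ∈ K_2 with v_2(δ) ≥ p^2·e_0 − p(p−1)·u_2, where u_2 = −v_0(a_2) is the second upper ramification number of K_2/K_0. -/

import Mathlib

/-- A normalized discrete valuation on a field `K`, recorded as a function
`v : K → ℤ`.  The value of `v` at `0` is irrelevant: all conditions below only
refer to nonzero elements (the convention `v 0 = ∞` being understood). -/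
structure IsDiscVal {K : Type*} [Field K] (v : K → ℤ) : Prop where
  map_one : v 1 = 0
  map_mul : ∀ x y : K, x ≠ 0 → y ≠ 0 → v (x * y) = v x + v y
  min_le_add : ∀ x y : K, x ≠ 0 → y ≠ 0 → x + y ≠ 0 → min (v x) (v y) ≤ v (x + y)
  exists_uniformizer : ∃ π : K, π ≠ 0 ∧ v π = 1

/-!
Put `D(X, Y) = (X ^ p + Y ^ p - (X + Y) ^ p) / p` and `y = x₂ + x₁ ^ p / p`, the second ghost
component of `(x₁, x₂)` divided by `p`. Modulo the maximal ideal `𝔪`, `σ₁` translates `x₁` by `1`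
and `y` by `1 / p`; as `σ₁` preserves `𝔪`, its `p`-th power translates `x₁` by `p ≡ 0` and `y` by
`1`. The map `℘(x) = x ^ p - x` is an isometry on every residue disc `c + 𝔪` whose centre has
`(p - 1) v(c) > -v(p)`. Since `σ₁ ^ p` fixes `℘(x₁)`, this forces `(σ₁ ^ p) x₁ = x₁`; since it fixes
`℘(x₂)` and `℘(x₂) - ℘(x₂ + 1) = p D(x₂, 1)`, it translates `x₂` by `1 + δ` with
`v(δ) ≥ v(p D(x₂, 1)) ≥ v(p) + (p - 1) v(x₂)`.
-/

namespace IsDiscVal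

variable {K : Type*} [Field K] {v : K → ℤ}

protected theorem map_pow (hv : IsDiscVal v) {x : K} (hx : x ≠ 0) (n : ℕ) :
    v (x ^ n) = n * v x := by
  induction n with
  | zero => simpa using hv.map_one
  | succ n ih =>
    rw [pow_succ, hv.map_mul _ _ (pow_ne_zero n hx) hx, ih]
    push_cast
    ring

protected theorem map_inv (hv : IsDiscVal v) {x : K} (hx : x ≠ 0) : v x⁻¹ = -v x := by
  have h := hv.map_mul x x⁻¹ hx (inv_ne_zero hx)
  rw [mul_inv_cancel₀ hx, hv.map_one] at h
  linarith

protected theorem map_neg (hv : IsDiscVal v) {x : K} (hx : x ≠ 0) : v (-x) = v x := by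
  have h : v (-1) + v (-1) = 0 := by
    rw [← hv.map_mul _ _ (by simp) (by simp), neg_mul_neg, one_mul, hv.map_one]
  rw [← neg_one_mul, hv.map_mul _ _ (by simp) hx]
  linarith

/-- The fractional ideal `𝔭 ^ k` of the elements of valuation at least `k`, where `v 0 = ∞`, as an
additive subgroup. -/
def primePow (hv : IsDiscVal v) (k : ℤ) : AddSubgroup K where
  carrier := {x | x = 0 ∨ k ≤ v x}
  zero_mem' := Or.inl rfl
  add_mem' {x y} hx hy := by
    by_cases hx0 : x = 0
    · simpa [hx0] using hy
    by_cases hy0 : y = 0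
    · simpa [hy0] using hx
    by_cases hxy : x + y = 0
    · exact Or.inl hxy
    exact Or.inr <| (le_min (hx.resolve_left hx0) (hy.resolve_left hy0)).trans
      (hv.min_le_add x y hx0 hy0 hxy)
  neg_mem' {x} hx := by
    by_cases hx0 : x = 0
    · exact Or.inl (neg_eq_zero.2 hx0)
    · exact Or.inr ((hx.resolve_left hx0).trans_eq (hv.map_neg hx0).symm)

variable {hv : IsDiscVal v} {k l : ℤ} {x y z : K}

theorem mem_primePow_iff (hx : x ≠ 0) : x ∈ hv.primePow k ↔ k ≤ v x :=
  or_iff_right hx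

theorem mem_primePow_self (hv : IsDiscVal v) (x : K) : x ∈ hv.primePow (v x) :=
  Or.inr le_rfl

theorem primePow_antitone (hv : IsDiscVal v) : Antitone hv.primePow :=
  fun _ _ hkl _ hx => hx.imp_right hkl.trans

theorem one_mem_primePow_zero (hv : IsDiscVal v) : 1 ∈ hv.primePow 0 :=
  Or.inr hv.map_one.ge

theorem natCast_mem_primePow_zero (hv : IsDiscVal v) (n : ℕ) : (n : K) ∈ hv.primePow 0 := by
  simpa using nsmul_mem hv.one_mem_primePow_zero n

theorem mul_mem_primePow (hx : x ∈ hv.primePow k) (hy : y ∈ hv.primePow l) :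
    x * y ∈ hv.primePow (k + l) := by
  by_cases hx0 : x = 0
  · simp [hx0]
  by_cases hy0 : y = 0
  · simp [hy0]
  rw [mem_primePow_iff (mul_ne_zero hx0 hy0), hv.map_mul x y hx0 hy0]
  exact add_le_add ((mem_primePow_iff hx0).1 hx) ((mem_primePow_iff hy0).1 hy)

theorem pow_mem_primePow (hx : x ∈ hv.primePow k) (n : ℕ) : x ^ n ∈ hv.primePow (n * k) := by
  induction n with
  | zero => simpa using hv.one_mem_primePow_zero
  | succ n ih =>
    rw [pow_succ, Nat.cast_succ, add_one_mul]
    exact mul_mem_primePow ih hx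

theorem mem_primePow_of_improve (h : x ≠ 0 → v x < k → x ∈ hv.primePow (v x + 1)) :
    x ∈ hv.primePow k := by
  by_contra hx
  obtain ⟨hx0, hxk⟩ := not_or.1 hx
  linarith [(mem_primePow_iff hx0).1 (h hx0 (not_le.1 hxk))]

theorem eq_zero_of_forall_mem_primePow (h : ∀ k, x ∈ hv.primePow k) : x = 0 := by
  by_contra hx
  linarith [(mem_primePow_iff hx).1 (h (v x + 1))]

theorem mem_primePow_zero_of_forall_pow_mem (h : ∀ j : ℕ, x ^ j ∈ hv.primePow k) :
    x ∈ hv.primePow 0 := by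
  refine mem_primePow_of_improve fun hx hneg => ?_
  have hj := (mem_primePow_iff (pow_ne_zero _ hx)).1 (h (k.natAbs + 1))
  rw [hv.map_pow hx] at hj
  push_cast at hj
  nlinarith [neg_abs_le k, abs_nonneg k]

theorem mem_primePow_of_sum_mem {ι : Type*} [Fintype ι] {f : ι → K}
    (hf : ∀ i j, f i ≠ 0 → f j ≠ 0 → v (f i) = v (f j) → i = j)
    (hsum : ∑ i, f i ∈ hv.primePow k) (i : ι) : f i ∈ hv.primePow k := by
  classical
  by_contra hi
  obtain ⟨hi0, hik⟩ := not_or.1 hi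
  obtain ⟨j, hj, hmin⟩ := Finset.exists_min_image (Finset.univ.filter fun i => f i ≠ 0)
    (fun i => v (f i)) ⟨i, by simpa using hi0⟩
  have hj0 : f j ≠ 0 := by simpa using hj
  have hjk : v (f j) + 1 ≤ k := (hmin i (by simpa using hi0)).trans_lt (not_le.1 hik)
  have hrest : ∑ l ∈ Finset.univ.erase j, f l ∈ hv.primePow (v (f j) + 1) := by
    refine sum_mem fun l hl => or_iff_not_imp_left.2 fun hl0 => ?_
    exact (hmin l (by simpa using hl0)).lt_of_ne fun h =>
      Finset.ne_of_mem_erase hl (hf l j hl0 hj0 h.symm)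
  have hfj : f j ∈ hv.primePow (v (f j) + 1) := by
    have := sub_mem (hv.primePow_antitone hjk hsum) hrest
    rwa [← Finset.add_sum_erase _ _ (Finset.mem_univ j), add_sub_cancel_right] at this
  linarith [(mem_primePow_iff hj0).1 hfj]

section TotallyRamified

variable {K₀ : Type*} [Field K₀] [Algebra K₀ K] {v₀ : K₀ → ℤ} {π : K}
  (hram : ∀ a : K₀, a ≠ 0 → v (algebraMap K₀ K a) = Module.finrank K₀ K * v₀ a)
include hram

theorem smul_pow_mem_primePow_of_sum_mem (hπ0 : π ≠ 0) (hπ : v π = 1)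
    {c : Fin (Module.finrank K₀ K) → K₀} (hsum : ∑ i, c i • π ^ (i : ℕ) ∈ hv.primePow k)
    (i : Fin (Module.finrank K₀ K)) :
    c i • π ^ (i : ℕ) ∈ hv.primePow k := by
  have hmod (i : Fin (Module.finrank K₀ K)) (hi : c i • π ^ (i : ℕ) ≠ 0) :
      v (c i • π ^ (i : ℕ)) % Module.finrank K₀ K = i := by
    have hc : c i ≠ 0 := left_ne_zero_of_smul hi
    rw [Algebra.smul_def, hv.map_mul _ _ (by simpa using hc) (pow_ne_zero _ hπ0), hram _ hc,
      hv.map_pow hπ0, hπ, mul_one, Int.mul_add_emod_self_left]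
    exact Int.emod_eq_of_lt (by positivity) (by exact_mod_cast i.2)
  refine mem_primePow_of_sum_mem (fun i j hi hj hij => Fin.ext ?_) hsum i
  exact_mod_cast (hmod i hi).symm.trans (hij ▸ hmod j hj)

theorem linearIndependent_pow_uniformizer (hv : IsDiscVal v) (hπ0 : π ≠ 0) (hπ : v π = 1) :
    LinearIndependent K₀ fun i : Fin (Module.finrank K₀ K) => π ^ (i : ℕ) := by
  refine Fintype.linearIndependent_iff.2 fun c hc i => ?_
  have hci : c i • π ^ (i : ℕ) = 0 := eq_zero_of_forall_mem_primePow (hv := hv) fun k =>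
    smul_pow_mem_primePow_of_sum_mem hram hπ0 hπ (hc ▸ zero_mem _) i
  exact (smul_eq_zero.1 hci).resolve_right (pow_ne_zero _ hπ0)

variable [FiniteDimensional K₀ K]

theorem exists_integral_expansion (hπ0 : π ≠ 0) (hπ : v π = 1) (hz : z ∈ hv.primePow 0) :
    ∃ c : Fin (Module.finrank K₀ K) → K₀,
      (∀ i, algebraMap K₀ K (c i) ∈ hv.primePow 0) ∧ ∑ i, c i • π ^ (i : ℕ) = z := by
  have hspan := (hv.linearIndependent_pow_uniformizer hram hπ0 hπ).span_eq_top_of_card_eq_finrank'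
    (Fintype.card_fin _)
  obtain ⟨c, rfl⟩ :=
    (Submodule.mem_span_range_iff_exists_fun K₀).1 (hspan.ge (Submodule.mem_top (x := z)))
  refine ⟨c, fun i => ?_, rfl⟩
  by_cases hc : c i = 0
  · simp [hc]
  have hci : algebraMap K₀ K (c i) ≠ 0 := by simpa using hc
  have hterm := smul_pow_mem_primePow_of_sum_mem hram hπ0 hπ hz i
  rw [Algebra.smul_def, mem_primePow_iff (mul_ne_zero hci (pow_ne_zero _ hπ0)),
    hv.map_mul _ _ hci (pow_ne_zero _ hπ0), hv.map_pow hπ0, hπ, hram _ hc] at hterm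
  rw [mem_primePow_iff hci, hram _ hc]
  have hi : (i : ℤ) < Module.finrank K₀ K := by exact_mod_cast i.2
  have hv₀ : 0 ≤ v₀ (c i) := by
    by_contra! hneg
    nlinarith
  positivity

-- The powers of `σ z` are integral combinations of finitely many elements, so their valuations are
-- bounded below.
theorem map_mem_primePow_zero (σ : K ≃ₐ[K₀] K) (hz : z ∈ hv.primePow 0) :
    σ z ∈ hv.primePow 0 := by
  obtain ⟨π, hπ0, hπ⟩ := hv.exists_uniformizer
  have hπσ (i : Fin (Module.finrank K₀ K)) :
      σ π ^ (i : ℕ) ∈ hv.primePow (-(Module.finrank K₀ K * |v (σ π)|)) := by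
    refine hv.primePow_antitone ?_ (pow_mem_primePow (hv.mem_primePow_self (σ π)) i)
    have hi : (i : ℤ) < Module.finrank K₀ K := by exact_mod_cast i.2
    nlinarith [neg_abs_le (v (σ π)), abs_nonneg (v (σ π))]
  refine mem_primePow_zero_of_forall_pow_mem (k := -(Module.finrank K₀ K * |v (σ π)|)) fun j => ?_
  obtain ⟨c, hc, hcz⟩ := exists_integral_expansion hram hπ0 hπ
    (show z ^ j ∈ hv.primePow 0 by simpa using pow_mem_primePow hz j)
  rw [← map_pow, ← hcz, map_sum]
  refine sum_mem fun i _ => ?_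
  rw [map_smul, map_pow, Algebra.smul_def]
  simpa using mul_mem_primePow (hc i) (hπσ i)

theorem map_mem_primePow_one (σ : K ≃ₐ[K₀] K) (hz : z ∈ hv.primePow 1) :
    σ z ∈ hv.primePow 1 := by
  by_contra hσz
  obtain ⟨hσz0, hlt⟩ := not_or.1 hσz
  have hz0 : z ≠ 0 := by simpa using hσz0
  have hinv : (σ z)⁻¹ ∈ hv.primePow 0 :=
    (mem_primePow_iff (inv_ne_zero hσz0)).2 (by rw [hv.map_inv hσz0]; linarith)
  have hz' : z⁻¹ ∈ hv.primePow 0 := by simpa using map_mem_primePow_zero hram σ.symm hinv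
  rw [mem_primePow_iff (inv_ne_zero hz0), hv.map_inv hz0] at hz'
  linarith [(mem_primePow_iff hz0).1 hz]

end TotallyRamified

end IsDiscVal

theorem iterate_sub_nsmul_mem {A F : Type*} [AddCommGroup A] [FunLike F A A]
    [AddMonoidHomClass F A A] {S : AddSubgroup A} {σ : F} (hσ : ∀ z ∈ S, σ z ∈ S) {x c : A}
    (hc : σ c = c) (hx : σ x - x - c ∈ S) (n : ℕ) : σ^[n] x - x - n • c ∈ S := by
  induction n with
  | zero => simp
  | succ n ih =>
    have hstep : σ^[n + 1] x - x - (n + 1) • c = σ (σ^[n] x - x - n • c) + (σ x - x - c) := by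
      rw [map_sub, map_sub, map_nsmul, hc, Function.iterate_succ_apply', add_nsmul, one_nsmul]
      abel
    exact hstep ▸ add_mem (hσ _ ih) hx

/-- The polynomial `D(x, y) = (x ^ p + y ^ p - (x + y) ^ p) / p` governing the addition of Witt
vectors of length `2`, with the division by `p` carried out on the binomial coefficients. -/
def wittCarry {R : Type*} [CommRing R] (p : ℕ) (x y : R) : R :=
  -(x * y * ∑ j ∈ Finset.Ioo 0 p, x ^ (j - 1) * y ^ (p - j - 1) * ((p.choose j / p : ℕ) : R))

theorem add_pow_eq_sub_wittCarry {R : Type*} [CommRing R] {p : ℕ} (hp : p.Prime) (x y : R) :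
    (x + y) ^ p = x ^ p + y ^ p - p * wittCarry p x y := by
  rw [add_pow_prime_eq hp, wittCarry]
  ring

theorem map_wittCarry {R S : Type*} [CommRing R] [CommRing S] (f : R →+* S) (p : ℕ) (x y : R) :
    f (wittCarry p x y) = wittCarry p (f x) (f y) := by
  simp only [wittCarry, map_neg, map_mul, map_sum, map_pow, map_natCast]

theorem wittCarry_eq_div {K : Type*} [Field K] {p : ℕ} (hp : p.Prime) (hpK : (p : K) ≠ 0)
    (x y : K) : wittCarry p x y = (x ^ p + y ^ p - (x + y) ^ p) / p := by
  rw [eq_div_iff hpK, add_pow_eq_sub_wittCarry hp]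
  ring

namespace IsDiscVal

section ArtinSchreier

variable {K : Type*} [Field K] {v : K → ℤ} {hv : IsDiscVal v} {p : ℕ} {x y z : K} {k l s t : ℤ}

theorem wittCarry_mem_primePow (hx : x ∈ hv.primePow k) (hy : y ∈ hv.primePow l) :
    wittCarry p x y ∈ hv.primePow (k + l + (p - 2) * min k l) := by
  refine neg_mem (mul_mem_primePow (mul_mem_primePow hx hy) (sum_mem fun j hj => ?_))
  obtain ⟨hj0, hjp⟩ := Finset.mem_Ioo.1 hj
  obtain ⟨i, rfl⟩ := Nat.exists_eq_add_of_lt hjp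
  obtain ⟨j, rfl⟩ := Nat.exists_eq_add_of_lt hj0
  refine hv.primePow_antitone ?_ (mul_mem_primePow
    (mul_mem_primePow (pow_mem_primePow hx _) (pow_mem_primePow hy _))
    (hv.natCast_mem_primePow_zero _))
  rw [show 0 + j + 1 - 1 = j by omega, show 0 + j + 1 + i + 1 - (0 + j + 1) - 1 = i by omega]
  push_cast
  nlinarith [mul_le_mul_of_nonneg_left (min_le_left k l) (Int.natCast_nonneg j),
    mul_le_mul_of_nonneg_left (min_le_right k l) (Int.natCast_nonneg i)]

theorem natCast_mul_wittCarry_mem_primePow (hs : -s ≤ l) (hx : x ∈ hv.primePow (-s))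
    (hy : y ∈ hv.primePow l) :
    p * wittCarry p x y ∈ hv.primePow (v (p : K) - (p - 1) * s + l) := by
  have h := mul_mem_primePow (hv.mem_primePow_self (p : K))
    (wittCarry_mem_primePow (p := p) hx hy)
  rw [min_eq_left hs] at h
  exact hv.primePow_antitone (by linarith) h

theorem mem_primePow_of_pow_sub_self_mem (hp : 1 < p) (hk : k ≤ 0)
    (hy : y ^ p - y ∈ hv.primePow (p * k)) : y ∈ hv.primePow k := by
  refine mem_primePow_of_improve fun hy0 hlt => ?_
  have hp' : (1 : ℤ) < p := by exact_mod_cast hp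
  have hle : p * v y + 1 ≤ v y := by nlinarith [hp']
  have hlt' : p * v y + 1 ≤ p * k := by nlinarith [hp']
  have hpow := add_mem (hv.primePow_antitone hlt' hy)
    (hv.primePow_antitone hle (hv.mem_primePow_self y))
  rw [sub_add_cancel, mem_primePow_iff (pow_ne_zero _ hy0), hv.map_pow hy0] at hpow
  linarith

-- `℘(x + z) - ℘(x) = z ^ p - p * D(x, z) - z`, and the last term dominates.
theorem mem_primePow_of_artinSchreier_sub_mem (hp : p.Prime) (hs : 0 ≤ s)
    (hps : (p - 1) * s < v (p : K)) (hx : x ∈ hv.primePow (-s)) (hz : z ∈ hv.primePow 1)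
    (h : (x + z) ^ p - (x + z) - (x ^ p - x) ∈ hv.primePow t) : z ∈ hv.primePow t := by
  refine mem_primePow_of_improve fun hz0 hlt => ?_
  have hp2 : (2 : ℤ) ≤ p := by exact_mod_cast hp.two_le
  have hvz : 1 ≤ v z := (mem_primePow_iff hz0).1 hz
  have hpow : z ^ p ∈ hv.primePow (v z + 1) :=
    hv.primePow_antitone (by nlinarith) (pow_mem_primePow (hv.mem_primePow_self z) p)
  have hcarry : p * wittCarry p x z ∈ hv.primePow (v z + 1) :=
    hv.primePow_antitone (by linarith)
      (natCast_mul_wittCarry_mem_primePow (by linarith) hx (hv.mem_primePow_self z))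
  have hz_eq : z = z ^ p - p * wittCarry p x z - ((x + z) ^ p - (x + z) - (x ^ p - x)) := by
    rw [add_pow_eq_sub_wittCarry hp]
    ring
  have hsub := sub_mem (sub_mem hpow hcarry) (hv.primePow_antitone hlt h)
  rwa [← hz_eq] at hsub

theorem eq_zero_of_artinSchreier_add_eq (hp : p.Prime) (hs : 0 ≤ s)
    (hps : (p - 1) * s < v (p : K)) (hx : x ∈ hv.primePow (-s)) (hz : z ∈ hv.primePow 1)
    (h : (x + z) ^ p - (x + z) = x ^ p - x) : z = 0 :=
  eq_zero_of_forall_mem_primePow (hv := hv) fun _ =>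
    mem_primePow_of_artinSchreier_sub_mem hp hs hps hx hz (by simp [h])

theorem mem_primePow_of_artinSchreier_add_one_add_eq (hp : p.Prime) (hs : 0 ≤ s)
    (hps : (p - 1) * s < v (p : K)) (hx : x ∈ hv.primePow (-s)) (hz : z ∈ hv.primePow 1)
    (h : (x + 1 + z) ^ p - (x + 1 + z) = x ^ p - x) :
    z ∈ hv.primePow (v (p : K) - (p - 1) * s) := by
  have hone : (1 : K) ∈ hv.primePow 0 := hv.one_mem_primePow_zero
  refine mem_primePow_of_artinSchreier_sub_mem hp hs hps
    (add_mem hx (hv.primePow_antitone (by linarith) hone)) hz ?_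
  have hcarry := natCast_mul_wittCarry_mem_primePow (p := p) (by linarith) hx hone
  rw [add_zero] at hcarry
  convert hcarry using 1
  rw [h, add_pow_eq_sub_wittCarry hp x 1]
  ring

end ArtinSchreier

section WittTranslation

variable {K : Type*} [Field K] {v : K → ℤ} {hv : IsDiscVal v} {p : ℕ} {σ : K →+* K}
  {x x₁ x₂ a₁ a₂ : K} {s s₁ s₂ : ℤ}

theorem iterate_prime_eq_self (hp : p.Prime) (hσ : ∀ z ∈ hv.primePow 1, σ z ∈ hv.primePow 1)
    (hs : 0 ≤ s) (hps : (p - 1) * s < v (p : K)) (hx : x ∈ hv.primePow (-s))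
    (hfix : σ (x ^ p - x) = x ^ p - x) (htrans : σ x - x - 1 ∈ hv.primePow 1) :
    σ^[p] x = x := by
  have hp1 : (1 : ℤ) < p := by exact_mod_cast hp.one_lt
  have hvp : (p : K) ∈ hv.primePow 1 :=
    hv.primePow_antitone (by nlinarith [hp1]) (hv.mem_primePow_self _)
  have hdiff : σ^[p] x - x ∈ hv.primePow 1 := by
    simpa using add_mem (iterate_sub_nsmul_mem hσ (_root_.map_one σ) htrans p) hvp
  have hiter : (σ^[p] x) ^ p - σ^[p] x = x ^ p - x := by
    simpa only [iterate_map_sub, iterate_map_pow] using Function.iterate_fixed hfix p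
  exact sub_eq_zero.1 (eq_zero_of_artinSchreier_add_eq hp hs hps hx hdiff (by
    rw [add_sub_cancel, hiter]))

theorem map_ghost_sub_mem_primePow_one (hp : p.Prime) (hpK : (p : K) ≠ 0) (hs : 0 ≤ s)
    (hps : 2 * (p - 1) * s < v (p : K)) (hx₁ : x₁ ∈ hv.primePow (-s))
    (hfix : σ (x₁ ^ p - x₁) = x₁ ^ p - x₁) (h₁ : σ x₁ - x₁ - 1 ∈ hv.primePow 1)
    (h₂ : σ x₂ - x₂ - wittCarry p x₁ 1 ∈ hv.primePow 1) :
    σ (x₂ + x₁ ^ p / p) - (x₂ + x₁ ^ p / p) - 1 / p ∈ hv.primePow 1 := by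
  have hp2 : (2 : ℤ) ≤ p := by exact_mod_cast hp.two_le
  obtain ⟨ε, hε⟩ : ∃ ε, σ x₁ = x₁ + 1 + ε := ⟨σ x₁ - x₁ - 1, by ring⟩
  have hεv : ε ∈ hv.primePow (v (p : K) - (p - 1) * s) := by
    refine mem_primePow_of_artinSchreier_add_one_add_eq hp hs (by nlinarith [hp2]) hx₁ ?_ ?_
    · rwa [hε, add_assoc, add_sub_cancel_left, add_sub_cancel_left] at h₁
    · rwa [map_sub, map_pow, hε] at hfix
  have hεp : ε ^ p / p ∈ hv.primePow 1 := by
    have hinv : (p : K)⁻¹ ∈ hv.primePow (-v (p : K)) := Or.inr (hv.map_inv hpK).ge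
    have hlt : p * s < v (p : K) := by nlinarith [hp2]
    rw [div_eq_mul_inv]
    exact hv.primePow_antitone (by nlinarith [hp2]) (mul_mem_primePow (pow_mem_primePow hεv p) hinv)
  have hcarry : wittCarry p (x₁ + 1) ε ∈ hv.primePow 1 := by
    have hx₁' : x₁ + 1 ∈ hv.primePow (-s) :=
      add_mem hx₁ (hv.primePow_antitone (by linarith) hv.one_mem_primePow_zero)
    have h := wittCarry_mem_primePow (p := p) hx₁' hεv
    rw [min_eq_left (by nlinarith [hp2])] at h
    exact hv.primePow_antitone (by linarith) h
  have hsplit : σ (x₂ + x₁ ^ p / p) - (x₂ + x₁ ^ p / p) - 1 / p =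
      (σ x₂ - x₂ - wittCarry p x₁ 1) + (ε ^ p / p - wittCarry p (x₁ + 1) ε) := by
    rw [wittCarry_eq_div hp hpK, wittCarry_eq_div hp hpK, map_add, map_div₀, map_pow,
      map_natCast, hε]
    ring
  exact hsplit ▸ add_mem h₂ (sub_mem hεp hcarry)

theorem iterate_prime_sub_sub_one_mem (hpK : (p : K) ≠ 0)
    (hσ : ∀ z ∈ hv.primePow 1, σ z ∈ hv.primePow 1) (hx₁ : σ^[p] x₁ = x₁)
    (hghost : σ (x₂ + x₁ ^ p / p) - (x₂ + x₁ ^ p / p) - 1 / p ∈ hv.primePow 1) :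
    σ^[p] x₂ - x₂ - 1 ∈ hv.primePow 1 := by
  have h := iterate_sub_nsmul_mem hσ (by simp) hghost p
  have hcoord : σ^[p] (x₂ + x₁ ^ p / p) = σ^[p] x₂ + x₁ ^ p / p := by
    rw [iterate_map_add, ← RingHom.coe_pow, map_div₀, map_pow, map_natCast,
      RingHom.coe_pow, hx₁]
  rwa [hcoord, add_sub_add_right_eq_sub, nsmul_eq_mul, mul_one_div_cancel hpK] at h

theorem second_witt_component_mem_primePow (hp : p.Prime) (hs₁ : 0 ≤ s₁) (hs₂ : 0 ≤ s₂)
    (hs₁₂ : ((p : ℤ) ^ 2 - p + 1) * s₁ ≤ p * s₂) (ha₁ : a₁ ∈ hv.primePow (-(p * s₁)))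
    (ha₂ : a₂ ∈ hv.primePow (-(p * s₂))) (hx₁ : x₁ ∈ hv.primePow (-s₁))
    (hx₂ : x₂ ^ p - x₂ = a₂ + wittCarry p x₁ a₁) : x₂ ∈ hv.primePow (-s₂) := by
  have hp2 : (2 : ℤ) ≤ p := by exact_mod_cast hp.two_le
  have hcarry := wittCarry_mem_primePow (p := p) hx₁ ha₁
  rw [min_eq_right (by nlinarith [hp2])] at hcarry
  refine mem_primePow_of_pow_sub_self_mem hp.one_lt (by linarith) ?_
  rw [hx₂, mul_neg]
  exact add_mem ha₂ (hv.primePow_antitone (by linarith) hcarry)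

theorem iterate_prime_witt_translation (hp : p.Prime) (hpK : (p : K) ≠ 0)
    (hσ : ∀ z ∈ hv.primePow 1, σ z ∈ hv.primePow 1) (hs₁ : 0 ≤ s₁)
    (hps₁ : 2 * (p - 1) * s₁ < v (p : K)) (hps₂ : (p - 1) * s₂ < v (p : K))
    (hs₁₂ : ((p : ℤ) ^ 2 - p + 1) * s₁ ≤ p * s₂)
    (ha₁ : a₁ ∈ hv.primePow (-(p * s₁))) (ha₂ : a₂ ∈ hv.primePow (-(p * s₂)))
    (hσa₁ : σ a₁ = a₁) (hσa₂ : σ a₂ = a₂) (hx₁ : x₁ ^ p - x₁ = a₁)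
    (hx₂ : x₂ ^ p - x₂ = a₂ + wittCarry p x₁ a₁) (h₁ : σ x₁ - x₁ - 1 ∈ hv.primePow 1)
    (h₂ : σ x₂ - x₂ - wittCarry p x₁ 1 ∈ hv.primePow 1) :
    σ^[p] x₁ = x₁ ∧ σ^[p] x₂ - x₂ - 1 ∈ hv.primePow (v (p : K) - (p - 1) * s₂) := by
  have hp2 : (2 : ℤ) ≤ p := by exact_mod_cast hp.two_le
  have hs₂ : 0 ≤ s₂ := by
    nlinarith [hp2, mul_nonneg (show (0 : ℤ) ≤ (p : ℤ) ^ 2 - p + 1 by nlinarith [hp2]) hs₁]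
  have hfix : σ (x₁ ^ p - x₁) = x₁ ^ p - x₁ := by rw [hx₁, hσa₁]
  have hx₁v : x₁ ∈ hv.primePow (-s₁) :=
    mem_primePow_of_pow_sub_self_mem hp.one_lt (by linarith) (by rwa [hx₁, mul_neg])
  have hx₂v : x₂ ∈ hv.primePow (-s₂) :=
    second_witt_component_mem_primePow hp hs₁ hs₂ hs₁₂ ha₁ ha₂ hx₁v hx₂
  have hiter₁ : σ^[p] x₁ = x₁ :=
    iterate_prime_eq_self hp hσ hs₁ (by nlinarith [hp2]) hx₁v hfix h₁
  have hiter₂ := iterate_prime_sub_sub_one_mem hpK hσ hiter₁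
    (map_ghost_sub_mem_primePow_one hp hpK hs₁ hps₁ hx₁v hfix h₁ h₂)
  have hroot : (σ^[p] x₂) ^ p - σ^[p] x₂ = x₂ ^ p - x₂ := by
    have hσx₂ := congrArg (σ ^ p) hx₂
    rwa [map_sub, map_pow, map_add, map_wittCarry, RingHom.coe_pow, hiter₁,
      Function.iterate_fixed hσa₁ p, Function.iterate_fixed hσa₂ p, ← hx₂] at hσx₂
  refine ⟨hiter₁, mem_primePow_of_artinSchreier_add_one_add_eq hp hs₂ hps₂ hx₂v hiter₂ ?_⟩
  rwa [show x₂ + 1 + (σ^[p] x₂ - x₂ - 1) = σ^[p] x₂ by ring]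

end WittTranslation

end IsDiscVal

theorem statement7_general {K₀ K₂ : Type*} [Field K₀] [Field K₂] [CharZero K₀] [Algebra K₀ K₂]
    [FiniteDimensional K₀ K₂] {p d : ℕ} (hp : p.Prime)
    (hdeg : Module.finrank K₀ K₂ = p ^ 2 * d) {v₀ : K₀ → ℤ} {v₂ : K₂ → ℤ} (hv₂ : IsDiscVal v₂)
    (hram : ∀ a : K₀, a ≠ 0 → v₂ (algebraMap K₀ K₂ a) = (p : ℤ) ^ 2 * d * v₀ a)
    {a₁ a₂ : K₀} (ha₁ : a₁ ≠ 0) (ha₂ : a₂ ≠ 0) (hu₁ : 0 ≤ -v₀ a₁)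
    (hpu₁ : 2 * (p - 1) * (-v₀ a₁) < p * v₀ (p : K₀))
    (hpu₂ : (p - 1) * (-v₀ a₂) < p * v₀ (p : K₀))
    (hu₁₂ : ((p : ℤ) ^ 2 - p + 1) * (-v₀ a₁) ≤ p * (-v₀ a₂)) {x₁ x₂ : K₂}
    (hx₁ : x₁ ^ p - x₁ = algebraMap K₀ K₂ a₁)
    (hx₂ : x₂ ^ p - x₂ = algebraMap K₀ K₂ a₂ + wittCarry p x₁ (algebraMap K₀ K₂ a₁))
    (σ : K₂ ≃ₐ[K₀] K₂) (hσ₁ : σ x₁ - x₁ - 1 ∈ hv₂.primePow 1)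
    (hσ₂ : σ x₂ - x₂ - wittCarry p x₁ 1 ∈ hv₂.primePow 1) :
    (σ ^ p) x₁ = x₁ ∧ (σ ^ p) x₂ - x₂ - 1 ∈
      hv₂.primePow ((p : ℤ) ^ 2 * d * v₀ (p : K₀) - p * (p - 1) * d * (-v₀ a₂)) := by
  have hpK₀ : (p : K₀) ≠ 0 := Nat.cast_ne_zero.2 hp.ne_zero
  have hpd : (0 : ℤ) < p * d := by
    have hfin : 0 < p ^ 2 * d := hdeg ▸ Module.finrank_pos
    exact_mod_cast Nat.mul_pos hp.pos (Nat.pos_of_mul_pos_left hfin)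
  have hvp : v₂ (p : K₂) = (p : ℤ) ^ 2 * d * v₀ (p : K₀) := by
    simpa only [map_natCast] using hram p hpK₀
  have hmem {a : K₀} (ha : a ≠ 0) :
      algebraMap K₀ K₂ a ∈ hv₂.primePow (-(p * (p * d * -v₀ a))) :=
    Or.inr (by rw [hram a ha]; linarith)
  have hσ (z : K₂) (hz : z ∈ hv₂.primePow 1) : σ z ∈ hv₂.primePow 1 :=
    IsDiscVal.map_mem_primePow_one (v₀ := v₀) (by simpa [hdeg] using hram) σ hz
  have h := IsDiscVal.iterate_prime_witt_translation (σ := (σ : K₂ →+* K₂)) hp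
    (by simpa using (map_ne_zero (algebraMap K₀ K₂)).2 hpK₀) hσ (mul_nonneg hpd.le hu₁)
    (by linarith [mul_lt_mul_of_pos_left hpu₁ hpd])
    (by linarith [mul_lt_mul_of_pos_left hpu₂ hpd])
    (by linarith [mul_le_mul_of_nonneg_left hu₁₂ hpd.le])
    (hmem ha₁) (hmem ha₂) (σ.commutes a₁) (σ.commutes a₂) hx₁ hx₂ hσ₁ hσ₂
  rw [AlgEquiv.coe_pow]
  rw [hvp] at h
  exact ⟨h.1, hv₂.primePow_antitone (by linarith) h.2⟩

theorem artinSchreierWitt_bounds {p e b m : ℤ} (hp : 2 ≤ p) (hb : 0 < b)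
    (hbe : (p ^ 2 - 1) * b < p * e)
    (hme : p ^ 2 * (p - 1) * m + (2 * p * (p - 1) + 1) * b < p ^ 2 * e)
    (hbm : (p ^ 2 - 1) * b < p ^ 2 * m) :
    2 * (p - 1) * b < p * e ∧ (p - 1) * (p * m + b) < p * e ∧
      (p ^ 2 - p + 1) * b ≤ p * (p * m + b) := by
  have hp0 : 0 < p := by linarith
  refine ⟨?_, lt_of_mul_lt_mul_left ?_ hp0.le, ?_⟩
  · linarith [mul_nonneg (sq_nonneg (p - 1)) hb.le]
  · linarith [mul_nonneg (show 0 ≤ p * (p - 1) + 1 by nlinarith) hb.le]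
  · linarith [mul_nonneg (show 0 ≤ p - 1 by linarith) hb.le]

/-- with `σ₁` as in Proposition 3.4 and `σ₂ = σ₁^p`, one has
`(σ₂−1)x₁ = 0` and `(σ₂−1)x₂ = 1 + δ` with `v₂(δ) ≥ p²e₀ − p(p−1)u₂`,
where `u₂ = −v₀(a₂)`. -/
theorem statement7
    (p : ℕ) (hp : p.Prime)
    (K0 K2 : Type*) [Field K0] [Field K2] [CharZero K0] [CharZero K2]
    [Algebra K0 K2] [IsGalois K0 K2] [FiniteDimensional K0 K2]
    (hdeg : Module.finrank K0 K2 = p ^ 2)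
    (hcyc : IsCyclic (K2 ≃ₐ[K0] K2))
    (v0 : K0 → ℤ) (v2 : K2 → ℤ)
    (hv0 : IsDiscVal v0) (hv2 : IsDiscVal v2)
    (e0 : ℤ) (he0 : e0 = v0 (p : K0)) (he0pos : 1 ≤ e0)
    (hram : ∀ x : K0, x ≠ 0 → v2 (algebraMap K0 K2 x) = (p : ℤ) ^ 2 * v0 x)
    (a1 μ a2 : K0) (ha1 : a1 ≠ 0) (hμ0 : μ ≠ 0)
    (hwitt : ∀ y : K0, y ^ p - y ≠ a1)
    (hnd : ¬ ((p : ℤ) ∣ v0 a1))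
    (hneg : v0 a1 < 0)
    (hbd : -((p : ℤ) * e0) < ((p : ℤ) ^ 2 - 1) * v0 a1)
    (m : ℤ) (hm : m = -v0 μ) (hmpos : 0 < m)
    (hmu1 : (p : ℤ) ^ 2 * (p - 1) * m - (2 * p * (p - 1) + 1) * v0 a1 < (p : ℤ) ^ 2 * e0)
    (hmu2 : -(((p : ℤ) ^ 2 - 1) * v0 a1) < (p : ℤ) ^ 2 * m)
    (ha2 : a2 = μ ^ p * a1)
    (x1 x2 : K2)
    (hx1 : x1 ^ p - x1 = algebraMap K0 K2 a1)
    (hx2 : x2 ^ p - x2 = algebraMap K0 K2 a2 +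
      (x1 ^ p + (algebraMap K0 K2 a1) ^ p - (x1 + algebraMap K0 K2 a1) ^ p) / (p : K2))
    (hgen : Algebra.adjoin K0 {x1, x2} = ⊤)
    (b1 b2 : ℤ) (hb1 : b1 = -v0 a1) (hb2 : b2 = (p : ℤ) ^ 2 * m + b1)
    (σ1 : K2 ≃ₐ[K0] K2) (ε δ' : K2)
    (hσ1x1 : σ1 x1 = x1 + 1 + ε)
    (hε : ε ≠ 0) (hεv : v2 ε = (p : ℤ) ^ 2 * e0 - p * (p - 1) * b1)
    (hσ1x2 : σ1 x2 = x2 + (x1 ^ p + 1 - (x1 + 1) ^ p) / (p : K2) + δ')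
    (hδ' : δ' = 0 ∨ 0 < v2 δ') :
    (σ1 ^ p) x1 = x1 ∧
    ∃ δ : K2, (σ1 ^ p) x2 = x2 + 1 + δ ∧
      (δ = 0 ∨ (p : ℤ) ^ 2 * e0 - p * (p - 1) * (-v0 a2) ≤ v2 δ) := by
  subst hb1
  have hp2 : (2 : ℤ) ≤ p := by exact_mod_cast hp.two_le
  have ha2v : -v0 a2 = p * m + -v0 a1 := by
    rw [ha2, hv0.map_mul _ _ (pow_ne_zero p hμ0) ha1, hv0.map_pow hμ0, hm]
    ring
  obtain ⟨hpu1, hpu2, hu1u2⟩ := artinSchreierWitt_bounds (p := p) (b := -v0 a1) (e := e0) (m := m)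
    hp2 (by linarith) (by linarith) (by linarith) (by linarith)
  rw [← ha2v] at hpu2 hu1u2
  have hε_pos : 0 < v2 ε := by nlinarith
  have hD := wittCarry_eq_div (K := K2) hp (Nat.cast_ne_zero.2 hp.ne_zero)
  have hσx1 : σ1 x1 - x1 - 1 = ε := by rw [hσ1x1]; ring
  have hσx2 : σ1 x2 - x2 - wittCarry p x1 1 = δ' := by rw [hσ1x2, hD, one_pow]; ring
  obtain ⟨hfix, hδ⟩ := statement7_general (d := 1) hp (by simpa using hdeg) hv2
    (by simpa using hram) ha1 (ha2 ▸ mul_ne_zero (pow_ne_zero p hμ0) ha1) (by linarith)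
    (he0 ▸ hpu1) (he0 ▸ hpu2) hu1u2 hx1 (by rw [hx2, hD]) σ1
    (hσx1 ▸ Or.inr hε_pos) (hσx2 ▸ hδ')
  refine ⟨hfix, (σ1 ^ p) x2 - x2 - 1, by ring, ?_⟩
  rw [← he0, Nat.cast_one, mul_one, mul_one] at hδ
  exact hδ
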